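/- arXiv:1005.0731 — 4 statements merged into one kernel-verified Lean document; each statement's English description precedes it below -/
import Mathlib

section
/- Every metric space satisfying property (*) is locally pathwise connected as a topological space. -/
open Set Metric
open scoped ENNReal

/-- The length of a path `γ : [0,1] → X`, as the supremum over all partitions
`0 = t₀ < t₁ < ... < t_k = 1` of `Σ_i d(γ(t_i), γ(t_{i+1}))`. -/
noncomputable def pathLength {X : Type*} [MetricSpace X] (γ : ℝ → X) : ℝ≥0∞ :=
  eVariationOn γ (Set.Icc 0 1)

/-- Property (*): for every `x` there exist `ε > 0` and `C ≥ 1` such that any two points of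
the open ball `B_ε(x)` can be joined by a continuous path in `X` of length at most `C`
times their distance. -/
def PropertyStar (X : Type*) [MetricSpace X] : Prop :=
  ∀ x : X, ∃ ε > (0:ℝ), ∃ C : ℝ, 1 ≤ C ∧ ∀ y ∈ Metric.ball x ε, ∀ z ∈ Metric.ball x ε,
    ∃ γ : ℝ → X, ContinuousOn γ (Set.Icc 0 1) ∧ γ 0 = y ∧ γ 1 = z ∧
      pathLength γ ≤ ENNReal.ofReal (C * dist y z)

/-- The path connected component of `x` in `U`: points reachable from `x` by a continuous
path staying in `U`. -/
def pathCompIn {X : Type*} [TopologicalSpace X] (U : Set X) (x : X) : Set X :=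
  {y | y ∈ U ∧ ∃ γ : ℝ → X, ContinuousOn γ (Set.Icc 0 1) ∧
    Set.MapsTo γ (Set.Icc 0 1) U ∧ γ 0 = x ∧ γ 1 = y}

/-!
A path starting at `x` of length less than `r` never leaves the ball of radius `r` around `x`.
Hence the path component of `x` in a neighbourhood of `x` is itself a neighbourhood as soon as
the points near `x` can be joined to `x` by arbitrarily short paths, that is, as soon as the
intrinsic distance from `x` tends to `0` at `x`. Property (*) bounds this distance near `x` by a
multiple of the metric.
-/

section IntrinsicDistance

open Filter Topology

variable {X : Type*}

theorem pathCompIn_mono [TopologicalSpace X] {U V : Set X} (hUV : U ⊆ V) (x : X) :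
    pathCompIn U x ⊆ pathCompIn V x := by
  rintro y ⟨hyU, γ, hγ, hγU, h0, h1⟩
  exact ⟨hUV hyU, γ, hγ, hγU.mono_right hUV, h0, h1⟩

section PseudoEMetricSpace

variable [PseudoEMetricSpace X]

theorem mapsTo_eball_of_eVariationOn_lt {ι : Type*} [LinearOrder ι] {γ : ι → X} {s : Set ι}
    {a : ι} {r : ℝ≥0∞} (ha : a ∈ s) (hr : eVariationOn γ s < r) :
    MapsTo γ s (Metric.eball (γ a) r) :=
  fun _ ht => (eVariationOn.edist_le γ ht ha).trans_lt hr

/-- The intrinsic (inner) distance from `x` to `y`: the infimum of the lengths of continuous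
paths from `x` to `y`. It is `∞` if there is no such path, or none of finite length. -/
noncomputable def intrinsicEDist (x y : X) : ℝ≥0∞ :=
  ⨅ (γ : ℝ → X) (_ : ContinuousOn γ (Icc 0 1)) (_ : γ 0 = x) (_ : γ 1 = y),
    eVariationOn γ (Icc 0 1)

theorem intrinsicEDist_le_eVariationOn {γ : ℝ → X} (hγ : ContinuousOn γ (Icc 0 1)) :
    intrinsicEDist (γ 0) (γ 1) ≤ eVariationOn γ (Icc 0 1) :=
  iInf₂_le_of_le γ hγ (iInf₂_le_of_le rfl rfl le_rfl)

theorem intrinsicEDist_lt_iff {x y : X} {r : ℝ≥0∞} :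
    intrinsicEDist x y < r ↔ ∃ γ : ℝ → X, ContinuousOn γ (Icc 0 1) ∧ γ 0 = x ∧ γ 1 = y ∧
      eVariationOn γ (Icc 0 1) < r := by
  simp only [intrinsicEDist, iInf_lt_iff, exists_prop]

theorem mem_pathCompIn_eball_of_intrinsicEDist_lt {x y : X} {r : ℝ≥0∞}
    (h : intrinsicEDist x y < r) : y ∈ pathCompIn (Metric.eball x r) x := by
  obtain ⟨γ, hγ, rfl, rfl, hlen⟩ := intrinsicEDist_lt_iff.1 h
  have hmaps : MapsTo γ (Icc 0 1) (Metric.eball (γ 0) r) :=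
    mapsTo_eball_of_eVariationOn_lt (left_mem_Icc.2 zero_le_one) hlen
  exact ⟨hmaps (right_mem_Icc.2 zero_le_one), γ, hγ, hmaps, rfl, rfl⟩

theorem propertyStar_locPathConnected_general {x : X}
    (hx : Tendsto (intrinsicEDist x) (𝓝 x) (𝓝 0)) {U : Set X} (hU : U ∈ 𝓝 x) :
    pathCompIn U x ∈ 𝓝 x := by
  obtain ⟨r, hr, hrU⟩ := EMetric.mem_nhds_iff.1 hU
  filter_upwards [hx.eventually_lt_const hr] with y hy
  exact pathCompIn_mono hrU x (mem_pathCompIn_eball_of_intrinsicEDist_lt hy)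

end PseudoEMetricSpace

variable [MetricSpace X]

theorem PropertyStar.eventually_intrinsicEDist_le (hX : PropertyStar X) (x : X) :
    ∃ C : ℝ, ∀ᶠ y in 𝓝 x, intrinsicEDist x y ≤ ENNReal.ofReal (C * dist x y) := by
  obtain ⟨ε, hε, C, -, hpath⟩ := hX x
  refine ⟨C, ?_⟩
  filter_upwards [Metric.ball_mem_nhds x hε] with y hy
  obtain ⟨γ, hγ, h0, h1, hlen⟩ := hpath x (Metric.mem_ball_self hε) y hy
  calc intrinsicEDist x y = intrinsicEDist (γ 0) (γ 1) := by rw [h0, h1]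
    _ ≤ pathLength γ := intrinsicEDist_le_eVariationOn hγ
    _ ≤ ENNReal.ofReal (C * dist x y) := hlen

theorem PropertyStar.tendsto_intrinsicEDist (hX : PropertyStar X) (x : X) :
    Tendsto (intrinsicEDist x) (𝓝 x) (𝓝 0) := by
  obtain ⟨C, hC⟩ := hX.eventually_intrinsicEDist_le x
  have hbound : Tendsto (fun y => ENNReal.ofReal (C * dist x y)) (𝓝 x) (𝓝 0) := by
    have hcont : Continuous fun y => ENNReal.ofReal (C * dist x y) :=
      ENNReal.continuous_ofReal.comp (by fun_prop)
    simpa only [dist_self, mul_zero, ENNReal.ofReal_zero] using hcont.tendsto x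
  exact tendsto_of_tendsto_of_tendsto_of_le_of_le' tendsto_const_nhds hbound
    (Eventually.of_forall fun _ => zero_le) hC

end IntrinsicDistance

/-- Every metric space satisfying property (*) is locally pathwise connected:
the path connected component of any point of any open set is a neighbourhood of the point. -/
theorem propertyStar_locPathConnected {X : Type*} [MetricSpace X]
    (hX : PropertyStar X) :
    ∀ U : Set X, IsOpen U → ∀ x ∈ U, pathCompIn U x ∈ nhds x := by
  intro U hU x hx
  exact propertyStar_locPathConnected_general (hX.tendsto_intrinsicEDist x) (hU.mem_nhds hx)
end

section
/- Every compact metric space satisfying property (*) is locally quasiconvex. -/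
open Set Metric
open scoped ENNReal

/-- A metric space is locally quasiconvex if every point has a quasiconvex neighbourhood `N`:
there is a constant `C` such that any two points of `N` can be joined by a continuous path
lying in `N` of length at most `C` times their distance. -/
def IsLocQuasiconvex (X : Type*) [MetricSpace X] : Prop :=
  ∀ x : X, ∃ N ∈ nhds x, ∃ C : ℝ, ∀ y ∈ N, ∀ z ∈ N,
    ∃ γ : ℝ → X, ContinuousOn γ (Set.Icc 0 1) ∧ γ 0 = y ∧ γ 1 = z ∧
      Set.MapsTo γ (Set.Icc 0 1) N ∧ pathLength γ ≤ ENNReal.ofReal (C * dist y z)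

/-!
Being joined by a rectifiable path is an equivalence relation on `X`, and property (*) makes its
classes open. Hence any two points of a connected component are joined by such a path, and the
component is a neighbourhood of each of its points. If the component is compact, then finitely many
of the balls of property (*) control it: there are `δ` and `C` such that points at distance less
than `δ` are joined within `C` times their distance, and there is a single `M` such that any two
points are joined within length `M`. At distance at least `δ` the length `M` is at most `M / δ`
times the distance, so the component is quasiconvex with constant `max C (M / δ)`.
-/

open Topology NNReal

section Paths

variable {X : Type*}

/-- The concatenation of two paths parametrized by `[0,1]`, running through each of them at double
speed. -/
noncomputable def pathConcat (γ δ : ℝ → X) (t : ℝ) : X :=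
  if t ≤ 1 / 2 then γ (2 * t) else δ (2 * t - 1)

lemma pathConcat_eqOn_left (γ δ : ℝ → X) :
    EqOn (pathConcat γ δ) (γ ∘ (2 * ·)) (Icc 0 (1 / 2)) :=
  fun _ ht => if_pos ht.2

lemma pathConcat_eqOn_right {γ δ : ℝ → X} (h : γ 1 = δ 0) :
    EqOn (pathConcat γ δ) (δ ∘ (2 * · - 1)) (Icc (1 / 2) 1) := by
  intro t ht
  rcases ht.1.eq_or_lt with rfl | ht'
  · norm_num [pathConcat, h]
  · exact if_neg ht'.not_ge

lemma Icc_zero_one_eq_union_halves : Icc (0 : ℝ) 1 = Icc 0 (1 / 2) ∪ Icc (1 / 2) 1 :=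
  (Icc_union_Icc_eq_Icc (by norm_num) (by norm_num)).symm

lemma image_two_mul_Icc : (2 * · : ℝ → ℝ) '' Icc 0 (1 / 2) = Icc 0 1 := by
  rw [image_mul_left_Icc (by norm_num) (by norm_num)]
  norm_num

lemma image_two_mul_sub_one_Icc : (2 * · - 1 : ℝ → ℝ) '' Icc (1 / 2) 1 = Icc 0 1 := by
  simp only [sub_eq_add_neg, image_affine_Icc' (two_pos : (0 : ℝ) < 2)]
  norm_num

lemma continuousOn_pathConcat [TopologicalSpace X] {γ δ : ℝ → X} (hγ : ContinuousOn γ (Icc 0 1))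
    (hδ : ContinuousOn δ (Icc 0 1)) (h : γ 1 = δ 0) :
    ContinuousOn (pathConcat γ δ) (Icc 0 1) := by
  rw [Icc_zero_one_eq_union_halves]
  refine ContinuousOn.union_of_isClosed ?_ ?_ isClosed_Icc isClosed_Icc
  · refine (hγ.comp (by fun_prop) ?_).congr (pathConcat_eqOn_left γ δ)
    exact mapsTo_iff_image_subset.2 image_two_mul_Icc.subset
  · refine (hδ.comp (by fun_prop) ?_).congr (pathConcat_eqOn_right h)
    exact mapsTo_iff_image_subset.2 image_two_mul_sub_one_Icc.subset

lemma mapsTo_connectedComponent_of_isPreconnected {Y : Type*} [TopologicalSpace X]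
    [TopologicalSpace Y] {f : Y → X} {s : Set Y} {a : Y} (hs : IsPreconnected s)
    (hf : ContinuousOn f s) (ha : a ∈ s) : MapsTo f s (connectedComponent (f a)) :=
  mapsTo_iff_image_subset.2 <| (hs.image f hf).subset_connectedComponent (mem_image_of_mem f ha)

variable [MetricSpace X]

lemma pathLength_pathConcat {γ δ : ℝ → X} (h : γ 1 = δ 0) :
    pathLength (pathConcat γ δ) = pathLength γ + pathLength δ := by
  have hleft : MonotoneOn (2 * · : ℝ → ℝ) (Icc 0 (1 / 2)) :=
    fun _ _ _ _ hst => by simpa using hst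
  have hright : MonotoneOn (2 * · - 1 : ℝ → ℝ) (Icc (1 / 2) 1) :=
    fun _ _ _ _ hst => by simpa using hst
  calc pathLength (pathConcat γ δ)
      = eVariationOn (pathConcat γ δ) (Icc 0 (1 / 2)) +
          eVariationOn (pathConcat γ δ) (Icc (1 / 2) 1) := by
        rw [pathLength, Icc_zero_one_eq_union_halves, eVariationOn.union _
          (isGreatest_Icc (by norm_num)) (isLeast_Icc (by norm_num))]
    _ = eVariationOn (γ ∘ (2 * ·)) (Icc 0 (1 / 2)) +
          eVariationOn (δ ∘ (2 * · - 1)) (Icc (1 / 2) 1) := by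
        rw [eVariationOn.congr (pathConcat_eqOn_left γ δ),
          eVariationOn.congr (pathConcat_eqOn_right h)]
    _ = pathLength γ + pathLength δ := by
        rw [eVariationOn.comp_eq_of_monotoneOn γ _ hleft, image_two_mul_Icc, ← pathLength,
          eVariationOn.comp_eq_of_monotoneOn δ _ hright, image_two_mul_sub_one_Icc, ← pathLength]

lemma pathLength_comp_one_sub (γ : ℝ → X) : pathLength (γ ∘ (1 - ·)) = pathLength γ := by
  have hanti : AntitoneOn (1 - · : ℝ → ℝ) (Icc 0 1) := fun _ _ _ _ hst => sub_le_sub_left hst 1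
  rw [pathLength, eVariationOn.comp_eq_of_antitoneOn γ _ hanti, image_const_sub_Icc, sub_self,
    sub_zero, pathLength]

/-- The points `y` and `z` are joined by a continuous path of length at most `L`: the
relation that property (*) bounds locally and quasiconvexity bounds on a whole set. -/
def JoinedWithin (y z : X) (L : ℝ≥0∞) : Prop :=
  ∃ γ : ℝ → X, ContinuousOn γ (Icc 0 1) ∧ γ 0 = y ∧ γ 1 = z ∧ pathLength γ ≤ L

namespace JoinedWithin

variable {x y z : X} {L M : ℝ≥0∞}

lemma mono (h : JoinedWithin y z L) (hLM : L ≤ M) : JoinedWithin y z M := by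
  obtain ⟨γ, hγ, h0, h1, hL⟩ := h
  exact ⟨γ, hγ, h0, h1, hL.trans hLM⟩

lemma symm (h : JoinedWithin y z L) : JoinedWithin z y L := by
  obtain ⟨γ, hγ, h0, h1, hL⟩ := h
  refine ⟨γ ∘ (1 - ·), hγ.comp (by fun_prop) ?_, by simp [h1], by simp [h0],
    (pathLength_comp_one_sub γ).trans_le hL⟩
  exact fun t ht => ⟨sub_nonneg.2 ht.2, sub_le_self 1 ht.1⟩

lemma trans (hxy : JoinedWithin x y L) (hyz : JoinedWithin y z M) :
    JoinedWithin x z (L + M) := by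
  obtain ⟨γ, hγ, hγ0, hγ1, hL⟩ := hxy
  obtain ⟨δ, hδ, hδ0, hδ1, hM⟩ := hyz
  have h : γ 1 = δ 0 := hγ1.trans hδ0.symm
  refine ⟨pathConcat γ δ, continuousOn_pathConcat hγ hδ h, by simp [pathConcat, hγ0],
    by norm_num [pathConcat, hδ1], ?_⟩
  exact (pathLength_pathConcat h).trans_le (add_le_add hL hM)

end JoinedWithin

lemma JoinedWithin.mem_connectedComponent {y z : X} {L : ℝ≥0∞} (h : JoinedWithin y z L) :
    z ∈ connectedComponent y := by
  obtain ⟨γ, hγ, rfl, rfl, -⟩ := h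
  exact mapsTo_connectedComponent_of_isPreconnected isPreconnected_Icc hγ
    (left_mem_Icc.2 zero_le_one) (right_mem_Icc.2 zero_le_one)

end Paths

namespace PropertyStar

variable {X : Type*} [MetricSpace X] {K : Set X}

lemma exists_joinedWithin_of_mem_ball (hX : PropertyStar X) (x : X) :
    ∃ ε > (0 : ℝ), ∃ C : ℝ≥0, ∀ y ∈ ball x ε, ∀ z ∈ ball x ε,
      JoinedWithin y z (C * edist y z) := by
  obtain ⟨ε, hε, C, hC, hjoin⟩ := hX x
  refine ⟨ε, hε, C.toNNReal, fun y hy z hz => ?_⟩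
  have hlength : ENNReal.ofReal (C * dist y z) = C.toNNReal * edist y z := by
    rw [ENNReal.ofReal_mul (zero_le_one.trans hC), edist_dist, ENNReal.ofReal]
  exact hlength ▸ hjoin y hy z hz

lemma exists_eventually_joinedWithin (hX : PropertyStar X) (x : X) :
    ∃ M : ℝ≥0, ∀ᶠ y in 𝓝 x, JoinedWithin x y M := by
  obtain ⟨ε, hε, C, hjoin⟩ := hX.exists_joinedWithin_of_mem_ball x
  refine ⟨C * ε.toNNReal, ?_⟩
  filter_upwards [ball_mem_nhds x hε] with y hy
  refine (hjoin x (mem_ball_self hε) y hy).mono ?_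
  rw [ENNReal.coe_mul, edist_dist]
  gcongr
  exact ENNReal.ofReal_le_ofReal (mem_ball'.1 hy).le

lemma connectedComponent_mem_nhds (hX : PropertyStar X) (x : X) :
    connectedComponent x ∈ 𝓝 x := by
  obtain ⟨M, hM⟩ := hX.exists_eventually_joinedWithin x
  filter_upwards [hM] with y hy using hy.mem_connectedComponent

lemma exists_joinedWithin_of_isPreconnected (hX : PropertyStar X) (hK : IsPreconnected K) {y z : X}
    (hy : y ∈ K) (hz : z ∈ K) : ∃ M : ℝ≥0, JoinedWithin y z M := by
  refine hK.induction₂ (fun y z => ∃ M : ℝ≥0, JoinedWithin y z M) ?_ ?_ ?_ hy hz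
  · intro x _
    obtain ⟨M, hM⟩ := hX.exists_eventually_joinedWithin x
    exact (hM.filter_mono nhdsWithin_le_nhds).mono fun y hy => ⟨M, hy⟩
  · rintro x y z - - - ⟨L, hL⟩ ⟨M, hM⟩
    exact ⟨L + M, by simpa only [ENNReal.coe_add] using hL.trans hM⟩
  · rintro x y - - ⟨M, hM⟩
    exact ⟨M, hM.symm⟩

lemma exists_forall_joinedWithin_of_isCompact (hX : PropertyStar X) (hK : IsCompact K)
    (hK' : IsPreconnected K) : ∃ M : ℝ≥0, ∀ y ∈ K, ∀ z ∈ K, JoinedWithin y z M := by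
  rcases K.eq_empty_or_nonempty with rfl | ⟨p, hp⟩
  · exact ⟨0, by simp⟩
  suffices hbase : ∃ M : ℝ≥0, ∀ z ∈ K, JoinedWithin p z M by
    obtain ⟨M, hM⟩ := hbase
    exact ⟨M + M, fun y hy z hz => by
      simpa only [ENNReal.coe_add] using (hM y hy).symm.trans (hM z hz)⟩
  refine hK.induction_on (p := fun S => ∃ M : ℝ≥0, ∀ z ∈ S, JoinedWithin p z M) ⟨0, by simp⟩
    ?_ ?_ ?_
  · rintro S T hST ⟨M, hM⟩
    exact ⟨M, fun z hz => hM z (hST hz)⟩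
  · rintro S T ⟨L, hL⟩ ⟨M, hM⟩
    refine ⟨max L M, ?_⟩
    rintro z (hz | hz)
    · exact (hL z hz).mono (by simp)
    · exact (hM z hz).mono (by simp)
  · intro x hx
    obtain ⟨L, hL⟩ := hX.exists_joinedWithin_of_isPreconnected hK' hp hx
    obtain ⟨M, hM⟩ := hX.exists_eventually_joinedWithin x
    exact ⟨_, mem_nhdsWithin_of_mem_nhds hM, L + M, fun z hz => by
      simpa only [ENNReal.coe_add] using hL.trans hz⟩

lemma exists_joinedWithin_of_dist_lt (hX : PropertyStar X) (hK : IsCompact K) :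
    ∃ δ > (0 : ℝ), ∃ C : ℝ≥0, ∀ y ∈ K, ∀ z, dist y z < δ → JoinedWithin y z (C * edist y z) := by
  refine hK.induction_on (p := fun S => ∃ δ > (0 : ℝ), ∃ C : ℝ≥0, ∀ y ∈ S, ∀ z, dist y z < δ →
    JoinedWithin y z (C * edist y z)) ⟨1, one_pos, 0, by simp⟩ ?_ ?_ ?_
  · rintro S T hST ⟨δ, hδ, C, hC⟩
    exact ⟨δ, hδ, C, fun y hy => hC y (hST hy)⟩
  · rintro S T ⟨δ, hδ, C, hC⟩ ⟨η, hη, D, hD⟩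
    refine ⟨min δ η, lt_min hδ hη, max C D, ?_⟩
    rintro y (hy | hy) z hyz
    · exact (hC y hy z (hyz.trans_le (min_le_left _ _))).mono (by gcongr; exact le_max_left _ _)
    · exact (hD y hy z (hyz.trans_le (min_le_right _ _))).mono (by gcongr; exact le_max_right _ _)
  · intro x _
    obtain ⟨ε, hε, C, hC⟩ := hX.exists_joinedWithin_of_mem_ball x
    refine ⟨ball x (ε / 2), mem_nhdsWithin_of_mem_nhds (ball_mem_nhds x (half_pos hε)), ε / 2,
      half_pos hε, C, fun y hy z hyz => hC y (ball_subset_ball (half_le_self hε.le) hy) z ?_⟩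
    calc dist z x ≤ dist y z + dist y x := dist_triangle_left z x y
      _ < ε / 2 + ε / 2 := add_lt_add hyz hy
      _ = ε := add_halves ε

lemma exists_joinedWithin_mul_edist (hX : PropertyStar X) (hK : IsCompact K)
    (hK' : IsPreconnected K) :
    ∃ C : ℝ≥0, ∀ y ∈ K, ∀ z ∈ K, JoinedWithin y z (C * edist y z) := by
  obtain ⟨δ, hδ, C, hC⟩ := hX.exists_joinedWithin_of_dist_lt hK
  obtain ⟨M, hM⟩ := hX.exists_forall_joinedWithin_of_isCompact hK hK'
  lift δ to ℝ≥0 using hδ.le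
  have hδ₀ : δ ≠ 0 := (NNReal.coe_pos.1 hδ).ne'
  refine ⟨max C (M / δ), fun y hy z hz => ?_⟩
  rcases lt_or_ge (dist y z) δ with hyz | hyz
  · exact (hC y hy z hyz).mono (by gcongr; exact le_max_left _ _)
  · refine (hM y hy z hz).mono ?_
    calc (M : ℝ≥0∞) = ↑(M / δ) * δ := by rw [← ENNReal.coe_mul, div_mul_cancel₀ M hδ₀]
      _ ≤ ↑(max C (M / δ)) * edist y z := by
        gcongr
        · exact le_max_right _ _
        · rw [edist_nndist]
          exact ENNReal.coe_le_coe.2 hyz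

end PropertyStar

theorem propertyStar_locQuasiconvex_general (X : Type*) [MetricSpace X]
    (hcomp : ∀ x : X, IsCompact (connectedComponent x)) (hX : PropertyStar X) :
    IsLocQuasiconvex X := by
  intro x
  obtain ⟨C, hC⟩ := hX.exists_joinedWithin_mul_edist (hcomp x) isPreconnected_connectedComponent
  refine ⟨connectedComponent x, hX.connectedComponent_mem_nhds x, C, fun y hy z hz => ?_⟩
  obtain ⟨γ, hγ, rfl, rfl, hlength⟩ := hC y hy z hz
  refine ⟨γ, hγ, rfl, rfl, ?_, ?_⟩
  · rw [connectedComponent_eq hy]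
    exact mapsTo_connectedComponent_of_isPreconnected isPreconnected_Icc hγ
      (left_mem_Icc.2 zero_le_one)
  · rwa [ENNReal.ofReal_mul C.coe_nonneg, ENNReal.ofReal_coe_nnreal, ← edist_dist]

/-- Every compact metric space satisfying property (*) is locally quasiconvex. -/
theorem propertyStar_locQuasiconvex (X : Type*) [MetricSpace X] [CompactSpace X]
    (hX : PropertyStar X) : IsLocQuasiconvex X :=
  propertyStar_locQuasiconvex_general X (fun _ => isClosed_connectedComponent.isCompact) hX
end

section
/- Let E be a real normed vector space and ω: E × E → ℝ a bilinear map satisfying |ω(a,b)| ≤ ‖a‖·‖b‖ for all a, b ∈ E. Let γ: [0,2π] → E be a continuously differentiable loop, i.e. γ(0) = γ(2π). Then |∫₀^{2π} ω(γ(φ), γ'(φ)) dφ| ≤ ( ∫₀^{2π} ‖γ'(φ)‖ dφ )². -/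
open Set Real
open scoped ENNReal

/-!
Since `γ` is a loop, `∫ ω (c, γ') = ω (c, ∫ γ') = 0` for every constant vector `c`, so replacing
`γ` by `γ - γ 0` does not change the action. The replacement is bounded by the length of `γ`, and
integrating `‖γ - γ 0‖ * ‖γ'‖` then produces the length a second time.
-/

open MeasureTheory intervalIntegral

section BilinearIntegral

variable {E F G : Type*} [NormedAddCommGroup E] [NormedSpace ℝ E]
  [NormedAddCommGroup F] [NormedSpace ℝ F] [NormedAddCommGroup G] [NormedSpace ℝ G]
  {f : ℝ → E} {g : ℝ → F} {a b : ℝ} {μ : Measure ℝ}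

theorem intervalIntegrable_bilin_of_continuousOn_left (B : E →L[ℝ] F →L[ℝ] G)
    (hf : ContinuousOn f (uIcc a b)) (hg : IntervalIntegrable g μ a b) :
    IntervalIntegrable (fun t ↦ B (f t) (g t)) μ a b := by
  obtain ⟨C, hC⟩ := isCompact_uIcc.exists_bound_of_continuousOn hf
  rw [intervalIntegrable_iff] at hg ⊢
  exact B.integrable_of_bilin_of_bdd_left C
    ((hf.mono uIoc_subset_uIcc).aestronglyMeasurable measurableSet_uIoc)
    (ae_restrict_of_forall_mem measurableSet_uIoc fun t ht ↦ hC t (uIoc_subset_uIcc ht)) hg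

theorem norm_integral_bilin_le_of_norm_left_le (B : E →L[ℝ] F →L[ℝ] G) {R : ℝ} (hab : a ≤ b)
    (hf : ∀ t ∈ Ioc a b, ‖f t‖ ≤ R) (hg : IntervalIntegrable g μ a b) :
    ‖∫ t in a..b, B (f t) (g t) ∂μ‖ ≤ ‖B‖ * R * ∫ t in a..b, ‖g t‖ ∂μ := by
  rw [← intervalIntegral.integral_const_mul]
  refine norm_integral_le_of_norm_le hab (.of_forall fun t ht ↦ ?_) (hg.norm.const_mul _)
  calc ‖B (f t) (g t)‖ ≤ ‖B‖ * ‖f t‖ * ‖g t‖ := B.le_opNorm₂ _ _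
    _ ≤ ‖B‖ * R * ‖g t‖ := by gcongr; exact hf t ht

end BilinearIntegral

section Curve

variable {E F : Type*} [NormedAddCommGroup E] [NormedSpace ℝ E]
  [NormedAddCommGroup F] [NormedSpace ℝ F] {γ γ' : ℝ → E} {a b : ℝ}

theorem norm_sub_left_le_integral_norm_of_hasDerivAt (hcont : ContinuousOn γ (Icc a b))
    (hderiv : ∀ t ∈ Ioo a b, HasDerivAt γ (γ' t) t)
    (hint : IntervalIntegrable (fun t ↦ ‖γ' t‖) volume a b) {t : ℝ} (ht : t ∈ Icc a b) :
    ‖γ t - γ a‖ ≤ ∫ s in a..b, ‖γ' s‖ := by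
  have hderiv_left : ∀ s ∈ Ioo a t, HasDerivAt γ (γ' s) s :=
    fun s hs ↦ hderiv s (Ioo_subset_Ioo_right ht.2 hs)
  calc ‖γ t - γ a‖ ≤ ∫ s in a..t, ‖γ' s‖ :=
        norm_sub_le_integral_of_norm_deriv_le_of_le ht.1 (hcont.mono (Icc_subset_Icc_right ht.2))
          (fun s hs ↦ (hderiv_left s hs).differentiableAt.differentiableWithinAt)
          (.of_forall fun s hs ↦ (congrArg norm (hderiv_left s hs).deriv).le)
          (hint.mono_set (uIcc_subset_uIcc_left (Icc_subset_uIcc ht)))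
    _ ≤ ∫ s in a..b, ‖γ' s‖ :=
        integral_mono_interval le_rfl ht.1 ht.2 (.of_forall fun _ ↦ norm_nonneg _) hint

variable [CompleteSpace F]

theorem integral_clm_apply_eq_sub_of_hasDerivAt (L : E →L[ℝ] F) (hab : a ≤ b)
    (hcont : ContinuousOn γ (Icc a b)) (hderiv : ∀ t ∈ Ioo a b, HasDerivAt γ (γ' t) t)
    (hint : IntervalIntegrable γ' volume a b) :
    ∫ t in a..b, L (γ' t) = L (γ b) - L (γ a) :=
  integral_eq_sub_of_hasDerivAt_of_le hab (L.continuous.comp_continuousOn hcont)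
    (fun t ht ↦ L.hasFDerivAt.comp_hasDerivAt t (hderiv t ht))
    ⟨L.integrable_comp hint.1, L.integrable_comp hint.2⟩

theorem integral_bilin_sub_const_of_loop (ω : E →L[ℝ] E →L[ℝ] F) (c : E) (hab : a ≤ b)
    (hcont : ContinuousOn γ (Icc a b)) (hderiv : ∀ t ∈ Ioo a b, HasDerivAt γ (γ' t) t)
    (hint : IntervalIntegrable γ' volume a b) (hloop : γ a = γ b) :
    ∫ t in a..b, ω (γ t - c) (γ' t) = ∫ t in a..b, ω (γ t) (γ' t) := by
  have hconst : ∫ t in a..b, ω c (γ' t) = 0 := by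
    rw [integral_clm_apply_eq_sub_of_hasDerivAt (ω c) hab hcont hderiv hint, hloop, sub_self]
  simp only [map_sub, sub_apply]
  rw [integral_sub (intervalIntegrable_bilin_of_continuousOn_left ω (by rwa [uIcc_of_le hab]) hint)
    (intervalIntegrable_bilin_of_continuousOn_left ω continuousOn_const hint), hconst, sub_zero]

theorem loop_action_isoperimetric_general (ω : E →L[ℝ] E →L[ℝ] F) (hab : a ≤ b)
    (hcont : ContinuousOn γ (Icc a b)) (hderiv : ∀ t ∈ Ioo a b, HasDerivAt γ (γ' t) t)
    (hint : IntervalIntegrable γ' volume a b) (hloop : γ a = γ b) :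
    ‖∫ t in a..b, ω (γ t) (γ' t)‖ ≤ ‖ω‖ * (∫ t in a..b, ‖γ' t‖) ^ 2 := by
  have hdist : ∀ t ∈ Ioc a b, ‖γ t - γ a‖ ≤ ∫ s in a..b, ‖γ' s‖ := fun t ht ↦
    norm_sub_left_le_integral_norm_of_hasDerivAt hcont hderiv hint.norm (Ioc_subset_Icc_self ht)
  rw [← integral_bilin_sub_const_of_loop ω (γ a) hab hcont hderiv hint hloop, sq, ← mul_assoc]
  exact norm_integral_bilin_le_of_norm_left_le ω hab hdist hint

end Curve

/-- Isoperimetric-type inequality for loops: if `ω : E × E → ℝ` is bilinear with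
`|ω(a,b)| ≤ ‖a‖·‖b‖`, and `γ : [0,2π] → E` is a continuously differentiable loop
(`γ(0) = γ(2π)`), then `|∫₀^{2π} ω(γ(φ), γ'(φ)) dφ| ≤ (∫₀^{2π} ‖γ'(φ)‖ dφ)²`. -/
theorem loop_action_isoperimetric
    {E : Type*} [NormedAddCommGroup E] [NormedSpace ℝ E]
    (ω : E →ₗ[ℝ] E →ₗ[ℝ] ℝ) (hω : ∀ a b : E, |ω a b| ≤ ‖a‖ * ‖b‖)
    (γ γ' : ℝ → E)
    (hderiv : ∀ φ ∈ Set.Icc (0:ℝ) (2 * π),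
      HasDerivWithinAt γ (γ' φ) (Set.Icc 0 (2 * π)) φ)
    (hcont : ContinuousOn γ' (Set.Icc 0 (2 * π)))
    (hloop : γ 0 = γ (2 * π)) :
    |∫ φ in (0:ℝ)..(2 * π), ω (γ φ) (γ' φ)| ≤
      (∫ φ in (0:ℝ)..(2 * π), ‖γ' φ‖) ^ 2 := by
  have hbound : ∀ x y, ‖ω x y‖ ≤ 1 * ‖x‖ * ‖y‖ := by simpa only [one_mul, norm_eq_abs] using hω
  refine (loop_action_isoperimetric_general (ω.mkContinuous₂ 1 hbound) two_pi_pos.le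
    (HasDerivWithinAt.continuousOn hderiv)
    (fun t ht ↦ (hderiv t (Ioo_subset_Icc_self ht)).hasDerivAt (Icc_mem_nhds ht.1 ht.2))
    (hcont.intervalIntegrable_of_Icc two_pi_pos.le) hloop).trans ?_
  exact mul_le_of_le_one_left (sq_nonneg _) (ω.mkContinuous₂_norm_le zero_le_one hbound)
end

section
/- Let E be a real normed vector space and ω: E × E → ℝ a continuous bilinear map that is antisymmetric, ω(a,b) = −ω(b,a). Let B: [0,1] × ℝ → E be twice continuously differentiable and 2π-periodic in the second variable, B(s, φ + 2π) = B(s, φ), and suppose ω(∂_φ B(s,φ), ∂_s B(s,φ)) = 0 for all (s,φ). Then the function s ↦ ∫₀^{2π} ω(B(s,φ), ∂_φ B(s,φ)) dφ is constant on [0,1]; in particular ∫₀^{2π} ω(B(1,φ), ∂_φ B(1,φ)) dφ = ∫₀^{2π} ω(B(0,φ), ∂_φ B(0,φ)) dφ. -/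
open Set Real
open scoped ENNReal

/-!
The first variation of `γ ↦ ∫ ω(γ, γ')` along a family `B(s, φ)` follows from
`∂_s ω(B, ∂_φ B) = ∂_φ ω(B, ∂_s B) + (ω(∂_s B, ∂_φ B) - ω(∂_φ B, ∂_s B))`, an identity that only
uses the product rule and the symmetry of second derivatives. Integrated over a closed loop the
first term on the right vanishes, and the other two vanish when the tangent vectors `∂_φ B` and
`∂_s B` are `ω`-orthogonal.
-/

section PartialDerivatives

open Function

variable {𝕜 X E : Type*} [NontriviallyNormedField 𝕜]
  [NormedAddCommGroup X] [NormedSpace 𝕜 X] [NormedAddCommGroup E] [NormedSpace 𝕜 E]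

theorem hasDerivAt_comp_prodMk_left {f : 𝕜 × X → E} {f' : 𝕜 × X →L[𝕜] E} {x : 𝕜} {y : X}
    (hf : HasFDerivAt f f' (x, y)) : HasDerivAt (fun t ↦ f (t, y)) (f' (1, 0)) x :=
  hf.comp_hasDerivAt x ((hasDerivAt_id x).prodMk (hasDerivAt_const x y))

theorem hasDerivAt_comp_prodMk_right {f : X × 𝕜 → E} {f' : X × 𝕜 →L[𝕜] E} {x : X} {y : 𝕜}
    (hf : HasFDerivAt f f' (x, y)) : HasDerivAt (fun t ↦ f (x, t)) (f' (0, 1)) y :=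
  hf.comp_hasDerivAt y ((hasDerivAt_const y x).prodMk (hasDerivAt_id y))

theorem differentiable_left_of_uncurry {f : 𝕜 → X → E} (hf : Differentiable 𝕜 (uncurry f))
    (y : X) : Differentiable 𝕜 fun t ↦ f t y :=
  hf.comp (differentiable_id.prodMk (differentiable_const y))

theorem contDiff_uncurry_deriv_left {m n : WithTop ℕ∞} {f : 𝕜 → X → E}
    (hf : ContDiff 𝕜 n (uncurry f)) (hmn : m + 1 ≤ n) :
    ContDiff 𝕜 m (uncurry fun x y ↦ deriv (fun t ↦ f t y) x) := by
  have hswap : ContDiff 𝕜 n (uncurry fun (p : 𝕜 × X) t ↦ f t p.2) :=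
    hf.comp (contDiff_snd.prodMk (contDiff_snd.comp contDiff_fst))
  exact hswap.fderiv_apply contDiff_fst contDiff_const hmn

theorem contDiff_uncurry_deriv_right {m n : WithTop ℕ∞} {f : X → 𝕜 → E}
    (hf : ContDiff 𝕜 n (uncurry f)) (hmn : m + 1 ≤ n) :
    ContDiff 𝕜 m (uncurry fun x y ↦ deriv (f x) y) := by
  have hfst : ContDiff 𝕜 n (uncurry fun (p : X × 𝕜) t ↦ f p.1 t) :=
    hf.comp ((contDiff_fst.comp contDiff_fst).prodMk contDiff_snd)
  exact hfst.fderiv_apply contDiff_snd contDiff_const hmn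

theorem deriv_deriv_comm [IsRCLikeNormedField 𝕜] {f : 𝕜 → 𝕜 → E}
    (hf : ContDiff 𝕜 2 (uncurry f)) (x y : 𝕜) :
    deriv (fun u ↦ deriv (fun t ↦ f t u) x) y = deriv (fun t ↦ deriv (f t) y) x := by
  have hd (p : 𝕜 × 𝕜) : HasFDerivAt (uncurry f) (fderiv 𝕜 (uncurry f) p) p :=
    (hf.differentiable two_ne_zero p).hasFDerivAt
  have hdd : HasFDerivAt (fderiv 𝕜 (uncurry f)) (fderiv 𝕜 (fderiv 𝕜 (uncurry f)) (x, y)) (x, y) :=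
    ((hf.fderiv_right (m := 1) le_rfl).differentiable one_ne_zero _).hasFDerivAt
  have hleft (u : 𝕜) : deriv (fun t ↦ f t u) x = fderiv 𝕜 (uncurry f) (x, u) (1, 0) :=
    (hasDerivAt_comp_prodMk_left (hd (x, u))).deriv
  have hright (t : 𝕜) : deriv (f t) y = fderiv 𝕜 (uncurry f) (t, y) (0, 1) :=
    (hasDerivAt_comp_prodMk_right (hd (t, y))).deriv
  calc deriv (fun u ↦ deriv (fun t ↦ f t u) x) y
      = fderiv 𝕜 (fderiv 𝕜 (uncurry f)) (x, y) (0, 1) (1, 0) := by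
        simpa [hleft] using
          ((hasDerivAt_comp_prodMk_right hdd).clm_apply (hasDerivAt_const y (1, 0))).deriv
    _ = fderiv 𝕜 (fderiv 𝕜 (uncurry f)) (x, y) (1, 0) (0, 1) :=
        hf.contDiffAt.isSymmSndFDerivAt (by simp) _ _
    _ = deriv (fun t ↦ deriv (f t) y) x := by
        simpa [hright] using
          ((hasDerivAt_comp_prodMk_left hdd).clm_apply (hasDerivAt_const x (0, 1))).deriv.symm

theorem hasDerivAt_bilinear_deriv {F : Type*} [NormedAddCommGroup F] [NormedSpace 𝕜 F]
    (ω : E →L[𝕜] E →L[𝕜] F) {f : 𝕜 → 𝕜 → E} (hf : ContDiff 𝕜 2 (uncurry f)) (x y : 𝕜) :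
    HasDerivAt (fun t ↦ ω (f t y) (deriv (f t) y))
      (ω (f x y) (deriv (fun t ↦ deriv (f t) y) x) +
        ω (deriv (fun t ↦ f t y) x) (deriv (f x) y)) x := by
  have hf' : ContDiff 𝕜 1 (uncurry fun x y ↦ deriv (f x) y) :=
    contDiff_uncurry_deriv_right hf le_rfl
  exact ω.hasDerivAt_of_bilinear
    (fun _ ↦ (differentiable_left_of_uncurry (hf.differentiable two_ne_zero) y x).hasDerivAt)
    (fun _ ↦ (differentiable_left_of_uncurry (hf'.differentiable one_ne_zero) y x).hasDerivAt)

theorem deriv_eq_of_eqOn {f g : 𝕜 → E} {s : Set 𝕜} {x : 𝕜} (hs : UniqueDiffWithinAt 𝕜 s x)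
    (hfg : EqOn f g s) (hx : x ∈ s) (hf : DifferentiableAt 𝕜 f x) (hg : DifferentiableAt 𝕜 g x) :
    deriv f x = deriv g x := by
  rw [← hf.derivWithin hs, ← hg.derivWithin hs, derivWithin_congr hfg (hfg hx)]

end PartialDerivatives

theorem hasDerivAt_intervalIntegral_of_continuous {𝕜 F : Type*} [RCLike 𝕜]
    [NormedAddCommGroup F] [NormedSpace ℝ F] [NormedSpace 𝕜 F] {μ : MeasureTheory.Measure ℝ}
    [MeasureTheory.IsLocallyFiniteMeasure μ] {f f' : 𝕜 → ℝ → F} (hf : ∀ x, Continuous (f x))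
    (hf' : Continuous (Function.uncurry f'))
    (hd : ∀ x t, HasDerivAt (fun y ↦ f y t) (f' x t) x) (a b : ℝ) (x : 𝕜) :
    HasDerivAt (fun y ↦ ∫ t in a..b, f y t ∂μ) (∫ t in a..b, f' x t ∂μ) x := by
  obtain ⟨C, hC⟩ := ((isCompact_closedBall x 1).prod
    (isCompact_uIcc (a := a) (b := b))).exists_bound_of_continuousOn hf'.continuousOn
  have hbound (t : ℝ) (ht : t ∈ uIoc a b) (y : 𝕜) (hy : y ∈ Metric.closedBall x 1) :
      ‖f' y t‖ ≤ C := hC (y, t) ⟨hy, uIoc_subset_uIcc ht⟩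
  exact (intervalIntegral.hasDerivAt_integral_of_dominated_loc_of_deriv_le
    (Metric.closedBall_mem_nhds x one_pos)
    (.of_forall fun y ↦ (hf y).aestronglyMeasurable)
    ((hf x).intervalIntegrable a b)
    (hf'.uncurry_left x).aestronglyMeasurable
    (.of_forall hbound)
    intervalIntegrable_const
    (.of_forall fun t _ y _ ↦ hd y t)).2

section Action

open Function

variable {E F : Type*} [NormedAddCommGroup E] [NormedSpace ℝ E]
  [NormedAddCommGroup F] [NormedSpace ℝ F] (ω : E →L[ℝ] E →L[ℝ] F) {B : ℝ → ℝ → E}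

/-- The action `∫ₐᵇ ω(γ, γ')` of a curve `γ` with respect to a bilinear map `ω`. For a symplectic
form on the space of connections and a loop `γ` parametrized by `[0, 2π]`, the Chern–Simons
functional is `-1/2` times this. -/
noncomputable def symplecticAction (a b : ℝ) (γ : ℝ → E) : F :=
  ∫ t in a..b, ω (γ t) (deriv γ t)

theorem hasDerivAt_symplecticAction_integral (hB : ContDiff ℝ 2 (uncurry B)) (a b s : ℝ) :
    HasDerivAt (fun σ ↦ symplecticAction ω a b (B σ))
      (∫ φ in a..b, (ω (B s φ) (deriv (fun σ ↦ deriv (B σ) φ) s) +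
        ω (deriv (fun σ ↦ B σ φ) s) (deriv (B s) φ))) s := by
  have hBs := (contDiff_uncurry_deriv_left (m := 1) hB le_rfl).continuous
  have hBφ : ContDiff ℝ 1 (uncurry fun s φ ↦ deriv (B s) φ) :=
    contDiff_uncurry_deriv_right hB le_rfl
  have hBφs := (contDiff_uncurry_deriv_left (m := 0) hBφ le_rfl).continuous
  refine hasDerivAt_intervalIntegral_of_continuous (fun σ ↦ ?_) ?_
    (hasDerivAt_bilinear_deriv ω hB) a b s
  · exact (ω.continuous.comp (hB.continuous.uncurry_left σ)).clm_apply
      (hBφ.continuous.uncurry_left σ)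
  · exact ((ω.continuous.comp hB.continuous).clm_apply hBφs).add
      ((ω.continuous.comp hBs).clm_apply hBφ.continuous)

theorem integral_bilinear_deriv_eq_sub [CompleteSpace F] (hB : ContDiff ℝ 2 (uncurry B))
    (a b s : ℝ) :
    ∫ φ in a..b, (ω (B s φ) (deriv (fun σ ↦ deriv (B σ) φ) s) +
        ω (deriv (B s) φ) (deriv (fun σ ↦ B σ φ) s)) =
      ω (B s b) (deriv (fun σ ↦ B σ b) s) - ω (B s a) (deriv (fun σ ↦ B σ a) s) := by
  have hBφ : ContDiff ℝ 1 (uncurry fun s φ ↦ deriv (B s) φ) :=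
    contDiff_uncurry_deriv_right hB le_rfl
  have hB_cont := hB.continuous.uncurry_left s
  have hBs_cont := (contDiff_uncurry_deriv_left (m := 1) hB le_rfl).continuous.uncurry_left s
  have hBφ_cont := hBφ.continuous.uncurry_left s
  have hBφs_cont := (contDiff_uncurry_deriv_left (m := 0) hBφ le_rfl).continuous.uncurry_left s
  refine intervalIntegral.integral_eq_sub_of_hasDerivAt
    (f := fun φ ↦ ω (B s φ) (deriv (fun σ ↦ B σ φ) s)) (fun φ _ ↦ ?_)
    (Continuous.intervalIntegrable (by fun_prop) a b)
  rw [← deriv_deriv_comm hB]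
  exact hasDerivAt_bilinear_deriv ω (f := fun φ s ↦ B s φ)
    (hB.comp (contDiff_snd.prodMk contDiff_fst)) φ s

theorem hasDerivAt_symplecticAction [CompleteSpace F] (hB : ContDiff ℝ 2 (uncurry B))
    (a b s : ℝ) :
    HasDerivAt (fun σ ↦ symplecticAction ω a b (B σ))
      (ω (B s b) (deriv (fun σ ↦ B σ b) s) - ω (B s a) (deriv (fun σ ↦ B σ a) s) +
        ∫ φ in a..b, (ω (deriv (fun σ ↦ B σ φ) s) (deriv (B s) φ) -
          ω (deriv (B s) φ) (deriv (fun σ ↦ B σ φ) s))) s := by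
  have hBφ : ContDiff ℝ 1 (uncurry fun s φ ↦ deriv (B s) φ) :=
    contDiff_uncurry_deriv_right hB le_rfl
  have hB_cont := hB.continuous.uncurry_left s
  have hBs_cont := (contDiff_uncurry_deriv_left (m := 1) hB le_rfl).continuous.uncurry_left s
  have hBφ_cont := hBφ.continuous.uncurry_left s
  have hBφs_cont := (contDiff_uncurry_deriv_left (m := 0) hBφ le_rfl).continuous.uncurry_left s
  convert hasDerivAt_symplecticAction_integral ω hB a b s using 1
  rw [← integral_bilinear_deriv_eq_sub ω hB, ← intervalIntegral.integral_add
    (Continuous.intervalIntegrable (by fun_prop) a b)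
    (Continuous.intervalIntegrable (by fun_prop) a b)]
  simp only [add_add_sub_cancel]

theorem chernSimons_homotopy_invariance_general [CompleteSpace F]
    (hω : ∀ x y, ω x y = 0 → ω y x = 0) {a b c d : ℝ} (hB : ContDiff ℝ 2 (uncurry B))
    (hclosed : ∀ s ∈ Icc a b, B s d = B s c)
    (hlag : ∀ s ∈ Icc a b, ∀ φ ∈ uIcc c d, ω (deriv (B s) φ) (deriv (fun σ ↦ B σ φ) s) = 0) :
    ∀ s ∈ Icc a b, ∀ s' ∈ Icc a b,
      symplecticAction ω c d (B s) = symplecticAction ω c d (B s') := by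
  have hderiv (s : ℝ) (hs : s ∈ Ico a b) :
      HasDerivAt (fun σ ↦ symplecticAction ω c d (B σ)) 0 s := by
    have hs' : s ∈ Icc a b := Ico_subset_Icc_self hs
    have hslice (φ : ℝ) : DifferentiableAt ℝ (fun σ ↦ B σ φ) s :=
      differentiable_left_of_uncurry (hB.differentiable two_ne_zero) φ s
    have hend : deriv (fun σ ↦ B σ d) s = deriv (fun σ ↦ B σ c) s :=
      deriv_eq_of_eqOn (uniqueDiffOn_Icc (hs.1.trans_lt hs.2) s hs') hclosed hs' (hslice d)
        (hslice c)
    have hint : ∫ φ in c..d, (ω (deriv (fun σ ↦ B σ φ) s) (deriv (B s) φ) -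
        ω (deriv (B s) φ) (deriv (fun σ ↦ B σ φ) s)) = 0 :=
      (intervalIntegral.integral_congr fun φ hφ ↦ by
        simp only [hω _ _ (hlag s hs' φ hφ), hlag s hs' φ hφ, sub_zero]).trans
        intervalIntegral.integral_zero
    simpa only [hend, hclosed s hs', hint, sub_self, add_zero] using
      hasDerivAt_symplecticAction ω hB c d s
  have hconst := constant_of_has_deriv_right_zero (a := a) (b := b)
    (fun s _ ↦ (hasDerivAt_symplecticAction ω hB c d s).continuousAt.continuousWithinAt)
    (fun s hs ↦ (hderiv s hs).hasDerivWithinAt)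
  exact fun s hs s' hs' ↦ (hconst s hs).trans (hconst s' hs').symm

end Action

/-- Homotopy invariance of the Chern-Simons functional, abstracted to a normed space: let
`ω : E × E → ℝ` be a continuous antisymmetric bilinear map and `B : [0,1] × ℝ → E` a twice
continuously differentiable family, `2π`-periodic in the second variable, such that
`ω(∂_φ B(s,φ), ∂_s B(s,φ)) = 0` for all `(s,φ)`. Then
`s ↦ ∫₀^{2π} ω(B(s,φ), ∂_φ B(s,φ)) dφ` is constant on `[0,1]`; in particular its values at
`s = 1` and `s = 0` agree. -/
theorem chernSimons_homotopy_invariance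
    {E : Type*} [NormedAddCommGroup E] [NormedSpace ℝ E]
    (ω : E →L[ℝ] E →L[ℝ] ℝ) (hanti : ∀ a b : E, ω a b = - ω b a)
    (B : ℝ → ℝ → E) (hB : ContDiff ℝ 2 (Function.uncurry B))
    (hper : ∀ s ∈ Set.Icc (0:ℝ) 1, ∀ φ : ℝ, B s (φ + 2 * π) = B s φ)
    (hlag : ∀ s ∈ Set.Icc (0:ℝ) 1, ∀ φ : ℝ,
      ω (deriv (fun ψ => B s ψ) φ) (deriv (fun σ => B σ φ) s) = 0) :
    (∀ s ∈ Set.Icc (0:ℝ) 1, ∀ s' ∈ Set.Icc (0:ℝ) 1,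
      (∫ φ in (0:ℝ)..(2 * π), ω (B s φ) (deriv (fun ψ => B s ψ) φ)) =
        ∫ φ in (0:ℝ)..(2 * π), ω (B s' φ) (deriv (fun ψ => B s' ψ) φ)) ∧
    (∫ φ in (0:ℝ)..(2 * π), ω (B 1 φ) (deriv (fun ψ => B 1 ψ) φ)) =
      ∫ φ in (0:ℝ)..(2 * π), ω (B 0 φ) (deriv (fun ψ => B 0 ψ) φ) := by
  have h := chernSimons_homotopy_invariance_general ω
    (fun x y hxy ↦ by rw [hanti, hxy, neg_zero]) hB
    (fun s hs ↦ by simpa using hper s hs 0) (fun s hs φ _ ↦ hlag s hs φ)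
  exact ⟨h, h 1 (by simp) 0 (by simp)⟩
end
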